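/- arXiv:math-ph/0306051 — 2 statements merged into one kernel-verified Lean document; each statement's English description precedes it below -/
import Mathlib

section
/- Let d ≥ 1, 0 < μ < 2, κ₀ > 0. Then there exist constants C₂, N > 0, independent of E ∈ (0,1], such that the metric g_E is temperate uniformly in E: for all E ∈ (0,1], all (x,ξ), (y,η) ∈ ℝ^d × ℝ^d and all (v_x, v_ξ) ∈ ℝ^d × ℝ^d, one has |v_x|²/⟨x⟩² + |v_ξ|²/f_E(x)² ≤ C₂ ( |v_x|²/⟨y⟩² + |v_ξ|²/f_E(y)² ) ( 1 + f_E(x)²|y−x|² + ⟨x⟩²|η−ξ|² )^N. -/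
open Real

noncomputable section

/-- The Japanese bracket `⟨x⟩ = (1+|x|²)^{1/2}`. -/
def jap {d : ℕ} (x : EuclideanSpace ℝ (Fin d)) : ℝ := Real.sqrt (1 + ‖x‖ ^ 2)

/-- The energy-dependent weight `f_E(x) = (κ₀^{-2}E + (1-μ/2)^{-1}⟨x⟩^{-μ})^{1/2}`. -/
def fE {d : ℕ} (μ κ₀ E : ℝ) (x : EuclideanSpace ℝ (Fin d)) : ℝ :=
  Real.sqrt ((κ₀ ^ 2)⁻¹ * E + (1 - μ/2)⁻¹ * jap x ^ (-μ))

/-- The Hörmander metric `g_{E,(x,ξ)}(v_x,v_ξ) = |v_x|²/⟨x⟩² + |v_ξ|²/f_E(x)²`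
(it depends on the base point only through `x`). -/
def gMet {d : ℕ} (μ κ₀ E : ℝ) (x vx vξ : EuclideanSpace ℝ (Fin d)) : ℝ :=
  ‖vx‖ ^ 2 / jap x ^ 2 + ‖vξ‖ ^ 2 / fE μ κ₀ E x ^ 2

/-!
Put `a = ⟨x⟩`, `b = ⟨y⟩`, `r = |y - x|`, and let `W` be the last factor of the estimate, so that
`W ≥ 1 + f_E(x)² r² ≥ 1 + a ^ (-μ) r²`. Since `μ < 2`, this controls the ratio of the brackets in
both directions: `r² ≤ a² · a ^ (-μ) r²` gives `b² ≤ 2 W a²`, while, for `b ≤ a`, dividing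
`a² ≤ 2 b² + 2 r²` by `a ^ μ` gives `a ^ (2 - μ) ≤ 2 W b ^ (2 - μ)`. Hence `a²` and `b²` are
comparable up to the factor `K = (2 W) ^ (2 / (2 - μ))`, which yields `b ^ (-μ) ≤ K a ^ (-μ)`.
Adding the same nonnegative constant `κ₀⁻² E` to both weights preserves the comparison, which makes
it uniform in `E`.
-/

section Scalar

variable {μ a b r K W : ℝ}

theorem div_le_mul_div_of_le_mul {v : ℝ} (hv : 0 ≤ v) (ha : 0 < a) (hb : 0 < b)
    (hba : b ≤ K * a) : v / a ≤ K * (v / b) := by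
  rw [← mul_div_assoc, div_le_div_iff₀ ha hb]
  calc v * b ≤ v * (K * a) := by gcongr
    _ = K * v * a := by ring

theorem rpow_neg_mul_sq (ha : 0 < a) : a ^ (-μ) * a ^ 2 = a ^ (2 - μ) := by
  rw [← rpow_two, ← rpow_add ha, neg_add_eq_sub]

theorem one_le_of_one_add_rpow_neg_mul_sq_le (ha : 0 ≤ a) (hW : 1 + a ^ (-μ) * r ^ 2 ≤ W) :
    1 ≤ W :=
  (le_add_of_nonneg_right (by positivity)).trans hW

theorem sq_add_sq_le_mul_sq (hμ : μ ≤ 2) (ha : 1 ≤ a) (hW : 1 + a ^ (-μ) * r ^ 2 ≤ W) :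
    a ^ 2 + r ^ 2 ≤ W * a ^ 2 := by
  have one_le_rpow_sub : 1 ≤ a ^ (2 - μ) := one_le_rpow ha (sub_nonneg.2 hμ)
  calc a ^ 2 + r ^ 2 = a ^ 2 + 1 * r ^ 2 := by rw [one_mul]
    _ ≤ a ^ 2 + a ^ (2 - μ) * r ^ 2 := by gcongr
    _ = (1 + a ^ (-μ) * r ^ 2) * a ^ 2 := by rw [← rpow_neg_mul_sq (by positivity)]; ring
    _ ≤ W * a ^ 2 := by gcongr

theorem rpow_two_sub_le_mul_rpow_two_sub (hμ₀ : 0 ≤ μ) (hμ₂ : μ ≤ 2) (ha : 0 < a) (hb : 1 ≤ b)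
    (hab : a ^ 2 ≤ 2 * b ^ 2 + 2 * r ^ 2) (hW : 1 + a ^ (-μ) * r ^ 2 ≤ W) :
    a ^ (2 - μ) ≤ 2 * W * b ^ (2 - μ) := by
  have hb₀ : 0 < b := by positivity
  have one_le_W : 1 ≤ W := one_le_of_one_add_rpow_neg_mul_sq_le ha.le hW
  rcases le_total a b with a_le_b | b_le_a
  · calc a ^ (2 - μ) ≤ b ^ (2 - μ) := rpow_le_rpow ha.le a_le_b (sub_nonneg.2 hμ₂)
      _ ≤ 2 * W * b ^ (2 - μ) := le_mul_of_one_le_left (by positivity) (by linarith)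
  · have one_le_rpow_sub : 1 ≤ b ^ (2 - μ) := one_le_rpow hb (sub_nonneg.2 hμ₂)
    have rpow_neg_le : a ^ (-μ) ≤ b ^ (-μ) :=
      rpow_le_rpow_of_nonpos hb₀ b_le_a (neg_nonpos.2 hμ₀)
    calc a ^ (2 - μ) = a ^ (-μ) * a ^ 2 := (rpow_neg_mul_sq ha).symm
      _ ≤ a ^ (-μ) * (2 * b ^ 2 + 2 * r ^ 2) := by gcongr
      _ = 2 * (a ^ (-μ) * b ^ 2) + 2 * (a ^ (-μ) * r ^ 2) * 1 := by ring
      _ ≤ 2 * (b ^ (-μ) * b ^ 2) + 2 * (a ^ (-μ) * r ^ 2) * b ^ (2 - μ) := by gcongr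
      _ = 2 * (1 + a ^ (-μ) * r ^ 2) * b ^ (2 - μ) := by rw [rpow_neg_mul_sq hb₀]; ring
      _ ≤ 2 * W * b ^ (2 - μ) := by gcongr

theorem sq_le_rpow_mul_sq_of_rpow_le (hμ : μ < 2) (ha : 0 ≤ a) (hb : 0 ≤ b) (hK : 0 ≤ K)
    (h : a ^ (2 - μ) ≤ K * b ^ (2 - μ)) : a ^ 2 ≤ K ^ (2 / (2 - μ)) * b ^ 2 := by
  have two_sub_pos : 0 < 2 - μ := sub_pos.2 hμ
  have sq_eq_rpow {t : ℝ} (ht : 0 ≤ t) : t ^ 2 = (t ^ (2 - μ)) ^ (2 / (2 - μ)) := by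
    rw [← rpow_mul ht, mul_div_cancel₀ _ two_sub_pos.ne', rpow_two]
  rw [sq_eq_rpow ha, sq_eq_rpow hb, ← mul_rpow hK (by positivity)]
  gcongr

theorem rpow_neg_le_mul_rpow_neg (hμ₀ : 0 ≤ μ) (hμ₂ : μ ≤ 2) (ha : 0 < a) (hb : 0 < b)
    (hK : 1 ≤ K) (hab : a ^ 2 ≤ K * b ^ 2) : b ^ (-μ) ≤ K * a ^ (-μ) := by
  have rpow_eq {t : ℝ} (ht : 0 ≤ t) : t ^ μ = (t ^ 2) ^ (μ / 2) := by
    rw [← rpow_two, ← rpow_mul ht, mul_div_cancel₀ _ two_ne_zero]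
  have rpow_le : a ^ μ ≤ K * b ^ μ := by
    calc a ^ μ = (a ^ 2) ^ (μ / 2) := rpow_eq ha.le
      _ ≤ (K * b ^ 2) ^ (μ / 2) := by gcongr
      _ = K ^ (μ / 2) * b ^ μ := by rw [mul_rpow (by positivity) (by positivity), ← rpow_eq hb.le]
      _ ≤ K * b ^ μ := by
        gcongr
        exact rpow_le_self_of_one_le hK (by linarith)
  simpa only [rpow_neg ha.le, rpow_neg hb.le, one_div] using
    div_le_mul_div_of_le_mul zero_le_one (rpow_pos_of_pos hb μ) (rpow_pos_of_pos ha μ) rpow_le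

end Scalar

theorem norm_sq_le_two_mul_add {V : Type*} [SeminormedAddCommGroup V] (x y : V) :
    ‖y‖ ^ 2 ≤ 2 * ‖x‖ ^ 2 + 2 * ‖y - x‖ ^ 2 := by
  calc ‖y‖ ^ 2 ≤ (‖x‖ + ‖y - x‖) ^ 2 := by gcongr; exact norm_le_insert' y x
    _ ≤ 2 * (‖x‖ ^ 2 + ‖y - x‖ ^ 2) := add_sq_le
    _ = 2 * ‖x‖ ^ 2 + 2 * ‖y - x‖ ^ 2 := mul_add ..

section Weights

variable {d : ℕ} {μ κ₀ E K W : ℝ} {x y : EuclideanSpace ℝ (Fin d)}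

theorem jap_sq (x : EuclideanSpace ℝ (Fin d)) : jap x ^ 2 = 1 + ‖x‖ ^ 2 :=
  sq_sqrt (by positivity)

theorem one_le_jap (x : EuclideanSpace ℝ (Fin d)) : 1 ≤ jap x :=
  one_le_sqrt.2 (le_add_of_nonneg_right (by positivity))

theorem jap_pos (x : EuclideanSpace ℝ (Fin d)) : 0 < jap x :=
  zero_lt_one.trans_le (one_le_jap x)

theorem jap_sq_le_two_mul_add (x y : EuclideanSpace ℝ (Fin d)) :
    jap y ^ 2 ≤ 2 * jap x ^ 2 + 2 * ‖y - x‖ ^ 2 := by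
  rw [jap_sq, jap_sq]
  linarith [norm_sq_le_two_mul_add x y]

theorem jap_sq_le_rpow_mul_jap_sq (hμ₀ : 0 ≤ μ) (hμ₂ : μ < 2)
    (hW : 1 + jap x ^ (-μ) * ‖y - x‖ ^ 2 ≤ W) :
    jap y ^ 2 ≤ (2 * W) ^ (2 / (2 - μ)) * jap x ^ 2 := by
  have one_le_W : 1 ≤ W := one_le_of_one_add_rpow_neg_mul_sq_le (jap_pos x).le hW
  have one_le_exponent : 1 ≤ 2 / (2 - μ) := (one_le_div (sub_pos.2 hμ₂)).2 (by linarith)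
  calc jap y ^ 2 ≤ 2 * (jap x ^ 2 + ‖y - x‖ ^ 2) := by linarith [jap_sq_le_two_mul_add x y]
    _ ≤ 2 * (W * jap x ^ 2) := by gcongr; exact sq_add_sq_le_mul_sq hμ₂.le (one_le_jap x) hW
    _ = 2 * W * jap x ^ 2 := by ring
    _ ≤ (2 * W) ^ (2 / (2 - μ)) * jap x ^ 2 := by
      gcongr
      exact self_le_rpow_of_one_le (by linarith) one_le_exponent

theorem jap_sq_le_rpow_mul_jap_sq_symm (hμ₀ : 0 ≤ μ) (hμ₂ : μ < 2)
    (hW : 1 + jap x ^ (-μ) * ‖y - x‖ ^ 2 ≤ W) :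
    jap x ^ 2 ≤ (2 * W) ^ (2 / (2 - μ)) * jap y ^ 2 := by
  have one_le_W : 1 ≤ W := one_le_of_one_add_rpow_neg_mul_sq_le (jap_pos x).le hW
  have sq_le : jap x ^ 2 ≤ 2 * jap y ^ 2 + 2 * ‖y - x‖ ^ 2 :=
    norm_sub_rev x y ▸ jap_sq_le_two_mul_add y x
  exact sq_le_rpow_mul_sq_of_rpow_le hμ₂ (jap_pos x).le (jap_pos y).le (by positivity)
    (rpow_two_sub_le_mul_rpow_two_sub hμ₀ hμ₂.le (jap_pos x) (one_le_jap y) sq_le hW)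

theorem fE_sq (hμ : μ ≤ 2) (hE : 0 ≤ E) (x : EuclideanSpace ℝ (Fin d)) :
    fE μ κ₀ E x ^ 2 = (κ₀ ^ 2)⁻¹ * E + (1 - μ / 2)⁻¹ * jap x ^ (-μ) := by
  have one_sub_nonneg : 0 ≤ 1 - μ / 2 := by linarith
  have jap_nonneg : 0 ≤ jap x := (jap_pos x).le
  exact sq_sqrt (by positivity)

theorem jap_rpow_neg_le_fE_sq (hμ₀ : 0 ≤ μ) (hμ₂ : μ < 2) (hE : 0 ≤ E)
    (x : EuclideanSpace ℝ (Fin d)) : jap x ^ (-μ) ≤ fE μ κ₀ E x ^ 2 := by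
  have one_le_inv : 1 ≤ (1 - μ / 2)⁻¹ := (one_le_inv₀ (by linarith)).2 (by linarith)
  have jap_rpow_nonneg : 0 ≤ jap x ^ (-μ) := rpow_nonneg (jap_pos x).le _
  rw [fE_sq hμ₂.le hE]
  calc jap x ^ (-μ) ≤ (1 - μ / 2)⁻¹ * jap x ^ (-μ) :=
        le_mul_of_one_le_left jap_rpow_nonneg one_le_inv
    _ ≤ _ := le_add_of_nonneg_left (by positivity)

theorem fE_sq_pos (hμ₀ : 0 ≤ μ) (hμ₂ : μ < 2) (hE : 0 ≤ E) (x : EuclideanSpace ℝ (Fin d)) :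
    0 < fE μ κ₀ E x ^ 2 :=
  (rpow_pos_of_pos (jap_pos x) _).trans_le (jap_rpow_neg_le_fE_sq hμ₀ hμ₂ hE x)

theorem fE_sq_le_mul_fE_sq (hμ₀ : 0 ≤ μ) (hμ₂ : μ ≤ 2) (hE : 0 ≤ E) (hK : 1 ≤ K)
    (hxy : jap x ^ 2 ≤ K * jap y ^ 2) : fE μ κ₀ E y ^ 2 ≤ K * fE μ κ₀ E x ^ 2 := by
  have one_sub_nonneg : 0 ≤ 1 - μ / 2 := by linarith
  have energy_le : (κ₀ ^ 2)⁻¹ * E ≤ K * ((κ₀ ^ 2)⁻¹ * E) :=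
    le_mul_of_one_le_left (by positivity) hK
  have rpow_le : jap y ^ (-μ) ≤ K * jap x ^ (-μ) :=
    rpow_neg_le_mul_rpow_neg hμ₀ hμ₂ (jap_pos x) (jap_pos y) hK hxy
  rw [fE_sq hμ₂ hE, fE_sq hμ₂ hE]
  calc (κ₀ ^ 2)⁻¹ * E + (1 - μ / 2)⁻¹ * jap y ^ (-μ)
      ≤ K * ((κ₀ ^ 2)⁻¹ * E) + (1 - μ / 2)⁻¹ * (K * jap x ^ (-μ)) :=
        add_le_add energy_le (by gcongr)
    _ = K * ((κ₀ ^ 2)⁻¹ * E + (1 - μ / 2)⁻¹ * jap x ^ (-μ)) := by ring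

theorem gMet_le_mul_gMet (hjap : jap y ^ 2 ≤ K * jap x ^ 2)
    (hfE : fE μ κ₀ E y ^ 2 ≤ K * fE μ κ₀ E x ^ 2) (hx : 0 < fE μ κ₀ E x ^ 2)
    (hy : 0 < fE μ κ₀ E y ^ 2) (vx vξ : EuclideanSpace ℝ (Fin d)) :
    gMet μ κ₀ E x vx vξ ≤ K * gMet μ κ₀ E y vx vξ := by
  unfold gMet
  rw [mul_add]
  exact add_le_add
    (div_le_mul_div_of_le_mul (sq_nonneg _) (pow_pos (jap_pos x) 2) (pow_pos (jap_pos y) 2) hjap)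
    (div_le_mul_div_of_le_mul (sq_nonneg _) hx hy hfE)

theorem gMet_le_rpow_mul_gMet (hμ₀ : 0 ≤ μ) (hμ₂ : μ < 2) (hE : 0 ≤ E)
    (hW : 1 + fE μ κ₀ E x ^ 2 * ‖y - x‖ ^ 2 ≤ W) (vx vξ : EuclideanSpace ℝ (Fin d)) :
    gMet μ κ₀ E x vx vξ ≤ (2 * W) ^ (2 / (2 - μ)) * gMet μ κ₀ E y vx vξ := by
  have bracket_le_W : 1 + jap x ^ (-μ) * ‖y - x‖ ^ 2 ≤ W := by
    refine le_trans ?_ hW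
    gcongr
    exact jap_rpow_neg_le_fE_sq hμ₀ hμ₂ hE x
  have one_le_W : 1 ≤ W := one_le_of_one_add_rpow_neg_mul_sq_le (jap_pos x).le bracket_le_W
  have one_le_K : 1 ≤ (2 * W) ^ (2 / (2 - μ)) :=
    one_le_rpow (by linarith) (div_nonneg zero_le_two (sub_pos.2 hμ₂).le)
  exact gMet_le_mul_gMet (jap_sq_le_rpow_mul_jap_sq hμ₀ hμ₂ bracket_le_W)
    (fE_sq_le_mul_fE_sq hμ₀ hμ₂.le hE one_le_K
      (jap_sq_le_rpow_mul_jap_sq_symm hμ₀ hμ₂ bracket_le_W))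
    (fE_sq_pos hμ₀ hμ₂ hE x) (fE_sq_pos hμ₀ hμ₂ hE y) vx vξ

end Weights

theorem stmt_14_general (d : ℕ) (μ κ₀ : ℝ) (hμ0 : 0 ≤ μ) (hμ2 : μ < 2) (hκ₀ : 0 < κ₀) :
    ∃ C₂ N : ℝ, 0 < C₂ ∧ 0 < N ∧ ∀ E : ℝ, 0 ≤ E →
      ∀ x y ξ η vx vξ : EuclideanSpace ℝ (Fin d),
        gMet μ κ₀ E x vx vξ ≤ C₂ * gMet μ κ₀ E y vx vξ *
          (1 + fE μ κ₀ E x ^ 2 * ‖y - x‖ ^ 2 + jap x ^ 2 * ‖η - ξ‖ ^ 2) ^ N := by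
  refine ⟨2 ^ (2 / (2 - μ)), 2 / (2 - μ), by positivity, div_pos two_pos (sub_pos.2 hμ2), ?_⟩
  intro E hE x y ξ η vx vξ
  set W := 1 + fE μ κ₀ E x ^ 2 * ‖y - x‖ ^ 2 + jap x ^ 2 * ‖η - ξ‖ ^ 2
  calc gMet μ κ₀ E x vx vξ
      ≤ (2 * W) ^ (2 / (2 - μ)) * gMet μ κ₀ E y vx vξ :=
        gMet_le_rpow_mul_gMet hμ0 hμ2 hE (le_add_of_nonneg_right (by positivity)) vx vξ
    _ = 2 ^ (2 / (2 - μ)) * gMet μ κ₀ E y vx vξ * W ^ (2 / (2 - μ)) := by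
      rw [mul_rpow zero_le_two (by positivity)]; ring

/-- The metric `g_E` is temperate uniformly in `E ∈ (0,1]` (Lemma 4.3 (i)). -/
theorem stmt_14 (d : ℕ) (hd : 1 ≤ d) (μ κ₀ : ℝ)
    (hμ0 : 0 < μ) (hμ2 : μ < 2) (hκ₀ : 0 < κ₀) :
    ∃ C₂ N : ℝ, 0 < C₂ ∧ 0 < N ∧ ∀ E ∈ Set.Ioc (0:ℝ) 1,
      ∀ x y ξ η vx vξ : EuclideanSpace ℝ (Fin d),
        ‖vx‖ ^ 2 / jap x ^ 2 + ‖vξ‖ ^ 2 / fE μ κ₀ E x ^ 2 ≤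
          C₂ * (‖vx‖ ^ 2 / jap y ^ 2 + ‖vξ‖ ^ 2 / fE μ κ₀ E y ^ 2) *
            (1 + fE μ κ₀ E x ^ 2 * ‖y - x‖ ^ 2 + jap x ^ 2 * ‖η - ξ‖ ^ 2) ^ N := by
  obtain ⟨C₂, N, hC₂, hN, temperate⟩ := stmt_14_general d μ κ₀ hμ0.le hμ2 hκ₀
  exact ⟨C₂, N, hC₂, hN, fun E hE => temperate E hE.1.le⟩
end
end

section
/- Let d ≥ 1, 0 < μ < 2, κ₀ > 0. For every s ∈ ℝ and every n ∈ ℕ there exists C > 0, independent of E, such that for all E ≥ 0 and all x ∈ ℝ^d, the n-th total derivative of the function x ↦ f_E(x)^s satisfies ‖D^n (f_E^s)(x)‖ ≤ C f_E(x)^s ⟨x⟩^{−n} (operator norm of the n-linear map D^n(f_E^s)(x)). Equivalently, f_E^s belongs to the symbol class S_unif(f_E^s, g_E) with seminorms uniform in E. -/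
open Real

noncomputable section

/-!
Call a family of positive functions `u i` a uniform symbol if `‖Dⁿ(u i)‖ ≤ Cₙ · u i · ⟨x⟩⁻ⁿ` with
`Cₙ` independent of `i`. Only ratios `Dⁿ(u i) / u i` enter, so the condition does not see positive
factors, and adding nonnegative constants only helps. It is also stable under real powers: after
normalising `u i` to be `1` at the given point, the Faà di Bruno formula involves the derivatives
of `t ↦ tʳ` at `t = 1` only. Starting from `1 + ‖x‖²`, whose derivatives of order at least three
vanish, the weight is reached by a power, an affine map and another power.
-/

open scoped ContDiff Nat

section IteratedFDeriv

variable {𝕜 V F : Type*} [NontriviallyNormedField 𝕜] [NormedAddCommGroup V] [NormedSpace 𝕜 V]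
  [NormedAddCommGroup F] [NormedSpace 𝕜 F] {n : ℕ}

theorem iteratedFDeriv_const_add_of_ne_zero (hn : n ≠ 0) (c : F) (f : V → F) :
    iteratedFDeriv 𝕜 n (fun y => c + f y) = iteratedFDeriv 𝕜 n f := by
  obtain ⟨k, rfl⟩ := Nat.exists_eq_add_one_of_ne_zero hn
  ext1 x
  simp only [iteratedFDeriv_succ_eq_comp_right, fderiv_const_add, Function.comp_apply]

theorem norm_iteratedFDeriv_const_mul {f : V → 𝕜} {x : V} (hf : ContDiffAt 𝕜 n f x) (c : 𝕜) :
    ‖iteratedFDeriv 𝕜 n (fun y => c * f y) x‖ = ‖c‖ * ‖iteratedFDeriv 𝕜 n f x‖ := by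
  simp only [← smul_eq_mul]
  rw [iteratedFDeriv_const_smul_apply' hf, norm_smul, smul_eq_mul]

end IteratedFDeriv

section RpowBound

theorem norm_iteratedFDerivWithin_rpow_const_one (r : ℝ) (n : ℕ) :
    ‖iteratedFDerivWithin ℝ n (fun t : ℝ => t ^ r) (Set.Ioi 0) 1‖
      = |(descPochhammer ℝ n).eval r| := by
  have hmem : (1 : ℝ) ∈ Set.Ioi 0 := Set.mem_Ioi.2 one_pos
  rw [norm_iteratedFDerivWithin_eq_norm_iteratedDerivWithin,
    iteratedDerivWithin_eq_iteratedDeriv isOpen_Ioi.uniqueDiffOn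
      (Real.contDiffAt_rpow_const (.inl one_ne_zero)) hmem,
    iteratedDeriv_eq_iterate, Real.iter_deriv_rpow_const, Real.one_rpow, mul_one,
    Real.norm_eq_abs]

/-- The constant in the bound of the `n`-th derivative of an `r`-th power: `n!`, from the
Faà di Bruno formula, times the sum of the absolute derivatives of `t ↦ t ^ r` at `t = 1`
up to order `n`. -/
def rpowDerivConst (r : ℝ) (n : ℕ) : ℝ :=
  n ! * ∑ k ∈ Finset.range (n + 1), |(descPochhammer ℝ k).eval r|

variable {V : Type*} [NormedAddCommGroup V] [NormedSpace ℝ V] {u : V → ℝ} {n : ℕ} {x : V} {D : ℝ}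

theorem norm_iteratedFDeriv_rpow_le_of_eq_one (hu : ContDiff ℝ n u) (hpos : ∀ y, 0 < u y)
    (hx : u x = 1) (hD : ∀ k, 1 ≤ k → k ≤ n → ‖iteratedFDeriv ℝ k u x‖ ≤ D ^ k) (r : ℝ) :
    ‖iteratedFDeriv ℝ n (fun y => u y ^ r) x‖ ≤ rpowDerivConst r n * D ^ n := by
  have hrange : Set.range u ⊆ Set.Ioi 0 := Set.range_subset_iff.2 hpos
  have hrpow : ContDiffOn ℝ n (fun t : ℝ => t ^ r) (Set.Ioi 0) :=
    contDiffOn_fun_id.rpow_const_of_ne fun t ht => (Set.mem_Ioi.1 ht).ne'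
  refine norm_iteratedFDeriv_comp_le' hrange isOpen_Ioi.uniqueDiffOn hrpow hu le_rfl x
    (fun k hk => ?_) hD
  rw [hx, norm_iteratedFDerivWithin_rpow_const_one]
  exact Finset.single_le_sum (f := fun k => |(descPochhammer ℝ k).eval r|)
    (fun _ _ => abs_nonneg _) (Finset.mem_range_succ_iff.2 hk)

theorem norm_iteratedFDeriv_rpow_le (hu : ContDiff ℝ n u) (hpos : ∀ y, 0 < u y)
    (hD : ∀ k, 1 ≤ k → k ≤ n → ‖iteratedFDeriv ℝ k u x‖ ≤ u x * D ^ k) (r : ℝ) :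
    ‖iteratedFDeriv ℝ n (fun y => u y ^ r) x‖ ≤ rpowDerivConst r n * u x ^ r * D ^ n := by
  have hux : 0 < u x := hpos x
  set v : V → ℝ := fun y => (u x)⁻¹ * u y
  have hv : ContDiff ℝ n v := contDiff_const.mul hu
  have hvpos (y : V) : 0 < v y := mul_pos (inv_pos.2 hux) (hpos y)
  have hvD : ∀ k, 1 ≤ k → k ≤ n → ‖iteratedFDeriv ℝ k v x‖ ≤ D ^ k := fun k hk₁ hkn => by
    rw [norm_iteratedFDeriv_const_mul (hu.of_le (mod_cast hkn)).contDiffAt,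
      Real.norm_of_nonneg (inv_pos.2 hux).le, inv_mul_le_iff₀ hux]
    exact hD k hk₁ hkn
  have hrpow : (fun y => u y ^ r) = fun y => u x ^ r * v y ^ r := by
    ext y
    rw [← Real.mul_rpow hux.le (hvpos y).le, mul_inv_cancel_left₀ hux.ne']
  calc ‖iteratedFDeriv ℝ n (fun y => u y ^ r) x‖
      = u x ^ r * ‖iteratedFDeriv ℝ n (fun y => v y ^ r) x‖ := by
        rw [hrpow, norm_iteratedFDeriv_const_mul
          (hv.rpow_const_of_ne fun y => (hvpos y).ne').contDiffAt,
          Real.norm_of_nonneg (Real.rpow_pos_of_pos hux r).le]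
    _ ≤ u x ^ r * (rpowDerivConst r n * D ^ n) := by
        gcongr
        exact norm_iteratedFDeriv_rpow_le_of_eq_one hv hvpos (inv_mul_cancel₀ hux.ne') hvD r
    _ = rpowDerivConst r n * u x ^ r * D ^ n := by ring

end RpowBound

section UniformSymbol

variable {V ι : Type*} [NormedAddCommGroup V] [NormedSpace ℝ V]

/-- The functions `u i` are positive and lie in the symbol classes `S(u i, |dx|² / ρ(x)²)`, with
seminorms bounded uniformly in the index `i`. Every function serves as its own order function. -/
structure IsUniformSymbol (ρ : V → ℝ) (u : ι → V → ℝ) : Prop where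
  scale_pos : ∀ x, 0 < ρ x
  contDiff : ∀ i, ContDiff ℝ ∞ (u i)
  pos : ∀ i x, 0 < u i x
  exists_bound : ∀ n : ℕ, ∃ C : ℝ, ∀ i x, ‖iteratedFDeriv ℝ n (u i) x‖ ≤ C * u i x / ρ x ^ n

namespace IsUniformSymbol

variable {ρ : V → ℝ} {u : ι → V → ℝ}

theorem exists_one_le_bound (hu : IsUniformSymbol ρ u) (n : ℕ) :
    ∃ C : ℝ, 1 ≤ C ∧ ∀ k ≤ n, ∀ i x, ‖iteratedFDeriv ℝ k (u i) x‖ ≤ C * u i x / ρ x ^ k := by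
  choose c hc using hu.exists_bound
  refine ⟨1 + ∑ k ∈ Finset.range (n + 1), |c k|,
    le_add_of_nonneg_right (Finset.sum_nonneg fun _ _ => abs_nonneg _), fun k hk i x => ?_⟩
  have hck : |c k| ≤ ∑ k ∈ Finset.range (n + 1), |c k| :=
    Finset.single_le_sum (f := fun k => |c k|) (fun _ _ => abs_nonneg _)
      (Finset.mem_range_succ_iff.2 hk)
  have hρ := hu.scale_pos x
  have hpos := hu.pos i x
  refine (hc k i x).trans ?_
  gcongr
  linarith [le_abs_self (c k)]

theorem const_mul (hu : IsUniformSymbol ρ u) {b : ι → ℝ} (hb : ∀ i, 0 < b i) :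
    IsUniformSymbol ρ fun i y => b i * u i y where
  scale_pos := hu.scale_pos
  contDiff i := contDiff_const.mul (hu.contDiff i)
  pos i x := mul_pos (hb i) (hu.pos i x)
  exists_bound n := by
    obtain ⟨C, hC⟩ := hu.exists_bound n
    refine ⟨C, fun i x => ?_⟩
    have hsmooth : ContDiff ℝ n (u i) := (hu.contDiff i).of_le (mod_cast le_top)
    calc ‖iteratedFDeriv ℝ n (fun y => b i * u i y) x‖
        = b i * ‖iteratedFDeriv ℝ n (u i) x‖ := by
          rw [norm_iteratedFDeriv_const_mul hsmooth.contDiffAt, Real.norm_of_nonneg (hb i).le]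
      _ ≤ b i * (C * u i x / ρ x ^ n) := mul_le_mul_of_nonneg_left (hC i x) (hb i).le
      _ = C * (b i * u i x) / ρ x ^ n := by ring

theorem const_add (hu : IsUniformSymbol ρ u) {a : ι → ℝ} (ha : ∀ i, 0 ≤ a i) :
    IsUniformSymbol ρ fun i y => a i + u i y where
  scale_pos := hu.scale_pos
  contDiff i := contDiff_const.add (hu.contDiff i)
  pos i x := add_pos_of_nonneg_of_pos (ha i) (hu.pos i x)
  exists_bound n := by
    obtain ⟨C, hC₁, hC⟩ := hu.exists_one_le_bound n
    refine ⟨C, fun i x => ?_⟩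
    have hρ := hu.scale_pos x
    have hpos : 0 < a i + u i x := add_pos_of_nonneg_of_pos (ha i) (hu.pos i x)
    rcases eq_or_ne n 0 with rfl | hn
    · simpa [abs_of_pos hpos] using le_mul_of_one_le_left hpos.le hC₁
    · rw [iteratedFDeriv_const_add_of_ne_zero hn]
      refine (hC n le_rfl i x).trans ?_
      gcongr
      exact le_add_of_nonneg_left (ha i)

theorem rpow (hu : IsUniformSymbol ρ u) (r : ℝ) : IsUniformSymbol ρ fun i y => u i y ^ r where
  scale_pos := hu.scale_pos
  contDiff i := (hu.contDiff i).rpow_const_of_ne fun y => (hu.pos i y).ne'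
  pos i x := Real.rpow_pos_of_pos (hu.pos i x) r
  exists_bound n := by
    obtain ⟨K, hK₁, hK⟩ := hu.exists_one_le_bound n
    refine ⟨rpowDerivConst r n * K ^ n, fun i x => ?_⟩
    have hρ := hu.scale_pos x
    have hpos := hu.pos i x
    have hgeom : ∀ k, 1 ≤ k → k ≤ n →
        ‖iteratedFDeriv ℝ k (u i) x‖ ≤ u i x * (K / ρ x) ^ k := fun k hk₁ hkn =>
      calc ‖iteratedFDeriv ℝ k (u i) x‖ ≤ K * u i x / ρ x ^ k := hK k hkn i x
        _ ≤ K ^ k * u i x / ρ x ^ k := by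
          gcongr
          exact le_self_pow₀ hK₁ (by omega)
        _ = u i x * (K / ρ x) ^ k := by rw [div_pow]; ring
    calc ‖iteratedFDeriv ℝ n (fun y => u i y ^ r) x‖
        ≤ rpowDerivConst r n * u i x ^ r * (K / ρ x) ^ n :=
          norm_iteratedFDeriv_rpow_le ((hu.contDiff i).of_le (mod_cast le_top)) (hu.pos i) hgeom r
      _ = rpowDerivConst r n * K ^ n * u i x ^ r / ρ x ^ n := by rw [div_pow]; ring

theorem sqrt (hu : IsUniformSymbol ρ u) : IsUniformSymbol ρ fun i y => √(u i y) := by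
  simpa only [Real.sqrt_eq_rpow] using hu.rpow (1 / 2)

end IsUniformSymbol

end UniformSymbol

section JapaneseBracket

variable {V : Type*} [NormedAddCommGroup V]

/-- The Japanese bracket `⟨x⟩ = (1 + ‖x‖²)^{1/2}` on an arbitrary normed space; on `ℝᵈ` it is `jap`
by definition. -/
def japaneseBracket (x : V) : ℝ := √(1 + ‖x‖ ^ 2)

theorem japaneseBracket_pos (x : V) : 0 < japaneseBracket x :=
  Real.sqrt_pos.2 (by positivity)

theorem japaneseBracket_sq (x : V) : japaneseBracket x ^ 2 = 1 + ‖x‖ ^ 2 :=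
  Real.sq_sqrt (by positivity)

theorem norm_le_japaneseBracket (x : V) : ‖x‖ ≤ japaneseBracket x :=
  Real.le_sqrt_of_sq_le (by linarith)

variable [InnerProductSpace ℝ V]

theorem norm_iteratedFDeriv_one_add_norm_sq_le (n : ℕ) (x : V) :
    ‖iteratedFDeriv ℝ n (fun y : V => 1 + ‖y‖ ^ 2) x‖
      ≤ 2 * (1 + ‖x‖ ^ 2) / japaneseBracket x ^ n := by
  have hx := japaneseBracket_pos x
  have hfderiv : fderiv ℝ (fun y : V => 1 + ‖y‖ ^ 2) = ⇑((2 : ℝ) • innerSL ℝ (E := V)) := by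
    ext y w
    simp [fderiv_const_add, fderiv_norm_sq_apply, two_smul]
  have hfderiv₂ : fderiv ℝ ⇑((2 : ℝ) • innerSL ℝ (E := V))
      = fun _ => (2 : ℝ) • innerSL ℝ (E := V) :=
    funext fun _ => ContinuousLinearMap.fderiv _
  match n with
  | 0 =>
    have hpos : 0 < 1 + ‖x‖ ^ 2 := by positivity
    simp only [norm_iteratedFDeriv_zero, Real.norm_of_nonneg hpos.le, pow_zero, div_one]
    linarith
  | 1 =>
    rw [← norm_iteratedFDeriv_fderiv, norm_iteratedFDeriv_zero, hfderiv, ← japaneseBracket_sq]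
    calc ‖((2 : ℝ) • innerSL ℝ (E := V)) x‖ = 2 * ‖x‖ := by
          simp [norm_smul]
      _ ≤ 2 * japaneseBracket x := by gcongr; exact norm_le_japaneseBracket x
      _ = 2 * japaneseBracket x ^ 2 / japaneseBracket x ^ 1 := by field_simp
  | 2 =>
    rw [← norm_iteratedFDeriv_fderiv, ← norm_iteratedFDeriv_fderiv, norm_iteratedFDeriv_zero,
      hfderiv, hfderiv₂, ← japaneseBracket_sq, mul_div_cancel_right₀ _ (by positivity), norm_smul,
      Real.norm_two]
    exact mul_le_of_le_one_right zero_le_two (norm_innerSL_le ℝ)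
  | k + 3 =>
    rw [← norm_iteratedFDeriv_fderiv, ← norm_iteratedFDeriv_fderiv, hfderiv, hfderiv₂,
      iteratedFDeriv_succ_const, Pi.zero_apply, norm_zero]
    positivity

theorem isUniformSymbol_one_add_norm_sq (ι : Type*) :
    IsUniformSymbol japaneseBracket fun (_ : ι) (y : V) => 1 + ‖y‖ ^ 2 where
  scale_pos := japaneseBracket_pos
  contDiff _ := contDiff_const.add (contDiff_norm_sq ℝ)
  pos _ _ := by positivity
  exists_bound n := ⟨2, fun _ x => norm_iteratedFDeriv_one_add_norm_sq_le n x⟩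

theorem isUniformSymbol_japaneseBracket_rpow (ι : Type*) (m : ℝ) :
    IsUniformSymbol japaneseBracket fun (_ : ι) (y : V) => japaneseBracket y ^ m :=
  (isUniformSymbol_one_add_norm_sq ι).sqrt.rpow m

theorem isUniformSymbol_sqrt_add_mul_japaneseBracket_rpow {ι : Type*} {a b : ι → ℝ}
    (ha : ∀ i, 0 ≤ a i) (hb : ∀ i, 0 < b i) (m s : ℝ) :
    IsUniformSymbol japaneseBracket
      fun i (y : V) => √(a i + b i * japaneseBracket y ^ m) ^ s :=
  (((isUniformSymbol_japaneseBracket_rpow ι m).const_mul hb).const_add ha).sqrt.rpow s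

end JapaneseBracket

theorem stmt_19_general {V : Type*} [NormedAddCommGroup V] [InnerProductSpace ℝ V]
    (m s : ℝ) (n : ℕ) :
    ∃ C > (0 : ℝ), ∀ a b : ℝ, 0 ≤ a → 0 < b → ∀ x : V,
      ‖iteratedFDeriv ℝ n (fun y => √(a + b * japaneseBracket y ^ m) ^ s) x‖ ≤
        C * √(a + b * japaneseBracket x ^ m) ^ s * japaneseBracket x ^ (-(n : ℝ)) := by
  have hweight := isUniformSymbol_sqrt_add_mul_japaneseBracket_rpow (V := V)
    (ι := Set.Ici (0 : ℝ) × Set.Ioi (0 : ℝ)) (a := fun i => i.1) (b := fun i => i.2)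
    (fun i => i.1.2) (fun i => i.2.2) m s
  obtain ⟨C, hC₁, hC⟩ := hweight.exists_one_le_bound n
  refine ⟨C, one_pos.trans_le hC₁, fun a b ha hb x => ?_⟩
  rw [Real.rpow_neg (japaneseBracket_pos x).le, Real.rpow_natCast, ← div_eq_mul_inv]
  exact hC n le_rfl (⟨a, ha⟩, ⟨b, hb⟩) x

/-- Formula (4.22): the uniform symbol estimates `‖D^n (f_E^s)(x)‖ ≤ C f_E(x)^s ⟨x⟩^{-n}`,
i.e. `f_E^s ∈ S_unif(f_E^s, g_E)` with seminorms uniform in `E ≥ 0`. -/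
theorem stmt_19 (d : ℕ) (hd : 1 ≤ d) (μ κ₀ : ℝ)
    (hμ0 : 0 < μ) (hμ2 : μ < 2) (hκ₀ : 0 < κ₀) :
    ∀ s : ℝ, ∀ n : ℕ, ∃ C > (0:ℝ), ∀ E : ℝ, 0 ≤ E → ∀ x : EuclideanSpace ℝ (Fin d),
      ‖iteratedFDeriv ℝ n (fun y => fE μ κ₀ E y ^ s) x‖ ≤
        C * fE μ κ₀ E x ^ s * jap x ^ (-(n:ℝ)) := by
  intro s n
  obtain ⟨C, hC₀, hC⟩ := stmt_19_general (V := EuclideanSpace ℝ (Fin d)) (-μ) s n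
  exact ⟨C, hC₀, fun E hE => hC _ _ (by positivity) (inv_pos.2 (by linarith))⟩
end
end
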